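/- Termination function gradient theorem for the soft robust loss (Theorem 3): In the finite rectangular option MDP, let the termination functions be a parameterized family β : ℝ → O → S → ℝ (for each θ ∈ ℝ, 0 ≤ β θ ω s ≤ 1), while πΩ, πo, K, c, w do not depend on θ, and for each θ let (QΩ θ, Qo θ, Qβ θ, VΩ θ) satisfy the rectangular Bellman system with termination functions β θ; let Pγ θ, Pγ^k θ and the averaged value functions Q̄Ω θ, V̄Ω θ be defined accordingly. Define the shifted discounted weighting m^k θ ((s₀,ω₀),(s'',ω')) := ∑_{s'} Pγ^k θ ((s₀,ω₀),(s',ω')) * ∑_a πo ω' s' a * γ * K̄ s' a s'' and d̄' θ ((s₀,ω₀),(s,ω)) := ∑_{k=0}^∞ m^k θ ((s₀,ω₀),(s,ω)) (this series converges since ∑_{(s,ω)} m^k θ ((s₀,ω₀),(s,ω)) = γ^{k+1} and 0 ≤ γ < 1). Fix θ₀ ∈ ℝ and assume that for every ω, s the map θ ↦ β θ ω s is differentiable at θ₀ and for every s, ω, p the map θ ↦ QΩ θ s ω p is differentiable at θ₀. Then for every initial state–option pair (s₀, ω₀): ∑_p w p * deriv (θ ↦ QΩ θ s₀ ω₀ p)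 θ₀ = ∑_{(s,ω)} d̄' θ₀ ((s₀,ω₀),(s,ω)) * (deriv (θ ↦ β θ ω s) θ₀) * (V̄Ω θ₀ s − Q̄Ω θ₀ s ω). -/

import Mathlib

open scoped Classical

open Finset

variable {S O A P : Type*} [Fintype S] [Fintype O] [Fintype A] [Fintype P]

/-- The average transition kernel `K̄ s a s' = ∑ p, w p * K p s a s'`. -/
noncomputable def Kbar (w : P → ℝ) (K : P → S → A → S → ℝ) (s : S) (a : A) (s' : S) : ℝ :=
  ∑ p, w p * K p s a s'

/-- One-step discounted state–option kernel `Pγ`. -/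
noncomputable def Pgam (w : P → ℝ) (K : P → S → A → S → ℝ) (γ : ℝ)
    (πo : O → S → A → ℝ) (β : O → S → ℝ) (πΩ : S → O → ℝ)
    (x y : S × O) : ℝ :=
  ∑ a, πo x.2 x.1 a * γ * Kbar w K x.1 a y.1 *
    ((1 - β x.2 y.1) * (if y.2 = x.2 then 1 else 0) + β x.2 y.1 * πΩ y.1 y.2)

/-- k-step iterates `Pγ^k` of the one-step discounted state–option kernel. -/
noncomputable def PgamIter (w : P → ℝ) (K : P → S → A → S → ℝ) (γ : ℝ)
    (πo : O → S → A → ℝ) (β : O → S → ℝ) (πΩ : S → O → ℝ) :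
    ℕ → S × O → S × O → ℝ
  | 0, x, y => if y = x then 1 else 0
  | (k + 1), x, y => ∑ z, Pgam w K γ πo β πΩ x z * PgamIter w K γ πo β πΩ k z y

theorem aux_iter_nonneg (w : P → ℝ) (K : P → S → A → S → ℝ) (γ : ℝ)
    (πo : O → S → A → ℝ) (β : O → S → ℝ) (πΩ : S → O → ℝ)
    (hT0 : ∀ x y, 0 ≤ Pgam w K γ πo β πΩ x y) (k : ℕ) :
    ∀ x y, 0 ≤ PgamIter w K γ πo β πΩ k x y := by
  induction k with
  | zero => intro x y; simp only [PgamIter]; split_ifs <;> norm_num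
  | succ k ih =>
    intro x y
    simp only [PgamIter]
    exact Finset.sum_nonneg fun z _ => mul_nonneg (hT0 x z) (ih z y)

theorem aux_iter_sum (w : P → ℝ) (K : P → S → A → S → ℝ) (γ : ℝ)
    (πo : O → S → A → ℝ) (β : O → S → ℝ) (πΩ : S → O → ℝ)
    (hT1 : ∀ x, ∑ y, Pgam w K γ πo β πΩ x y = γ) (k : ℕ) :
    ∀ x, ∑ y, PgamIter w K γ πo β πΩ k x y = γ ^ k := by
  induction k with
  | zero => intro x; simp [PgamIter]
  | succ k ih =>
    intro x
    simp only [PgamIter]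
    rw [Finset.sum_comm]
    simp only [← Finset.mul_sum, ih]
    rw [← Finset.sum_mul, hT1, pow_succ']

theorem aux_iter_unroll (w : P → ℝ) (K : P → S → A → S → ℝ) (γ : ℝ)
    (πo : O → S → A → ℝ) (β : O → S → ℝ) (πΩ : S → O → ℝ)
    (D g : S × O → ℝ)
    (hD : ∀ x, D x = g x + ∑ y, Pgam w K γ πo β πΩ x y * D y) (n : ℕ) :
    ∀ x, D x = ∑ z, (∑ k ∈ Finset.range n, PgamIter w K γ πo β πΩ k x z) * g z
      + ∑ z, PgamIter w K γ πo β πΩ n x z * D z := by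
  induction n with
  | zero => intro x; simp [PgamIter]
  | succ n ih =>
    intro x
    rw [hD x]
    have h1 : ∑ y, Pgam w K γ πo β πΩ x y * D y =
        ∑ y, Pgam w K γ πo β πΩ x y *
          (∑ z, (∑ k ∈ Finset.range n, PgamIter w K γ πo β πΩ k y z) * g z
      + ∑ z, PgamIter w K γ πo β πΩ n y z * D z) :=
      Finset.sum_congr rfl fun y _ => by rw [← ih y]
    rw [h1]
    have h2 : ∑ z, PgamIter w K γ πo β πΩ (n + 1) x z * D z =
        ∑ y, Pgam w K γ πo β πΩ x y * ∑ z, PgamIter w K γ πo β πΩ n y z * D z := by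
      simp only [PgamIter, Finset.sum_mul, Finset.mul_sum]
      rw [Finset.sum_comm]
      simp only [mul_assoc]
    have h3 : ∑ z, (∑ k ∈ Finset.range (n + 1), PgamIter w K γ πo β πΩ k x z) * g z =
        g x + ∑ y, Pgam w K γ πo β πΩ x y *
          ∑ z, (∑ k ∈ Finset.range n, PgamIter w K γ πo β πΩ k y z) * g z := by
      have h4 : ∀ z, ∑ k ∈ Finset.range (n + 1), PgamIter w K γ πo β πΩ k x z =
          (∑ y, Pgam w K γ πo β πΩ x y * ∑ k ∈ Finset.range n, PgamIter w K γ πo β πΩ k y z)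
            + if z = x then 1 else 0 := by
        intro z
        rw [Finset.sum_range_succ']
        simp only [PgamIter, Finset.mul_sum]
        rw [Finset.sum_comm]
      simp only [h4, add_mul, Finset.sum_add_distrib]
      rw [add_comm]
      congr 1
      · simp
      · simp only [Finset.sum_mul (Finset.univ), Finset.mul_sum (Finset.univ)]
        rw [Finset.sum_comm]
        simp only [mul_assoc]
    rw [h2, h3]
    simp only [mul_add, Finset.sum_add_distrib]
    ring

theorem aux_iter_summable (w : P → ℝ) (K : P → S → A → S → ℝ) (γ : ℝ)
    (hγ0 : 0 ≤ γ) (hγ1 : γ < 1)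
    (πo : O → S → A → ℝ) (β : O → S → ℝ) (πΩ : S → O → ℝ)
    (hT0 : ∀ x y, 0 ≤ Pgam w K γ πo β πΩ x y)
    (hT1 : ∀ x, ∑ y, Pgam w K γ πo β πΩ x y = γ) (x z : S × O) :
    Summable fun k => PgamIter w K γ πo β πΩ k x z := by
  refine Summable.of_nonneg_of_le (fun k => aux_iter_nonneg w K γ πo β πΩ hT0 k x z)
    (fun k => ?_) (summable_geometric_of_lt_one hγ0 hγ1)
  rw [← aux_iter_sum w K γ πo β πΩ hT1 k x]
  exact Finset.single_le_sum (f := fun y => PgamIter w K γ πo β πΩ k x y)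
    (fun y _ => aux_iter_nonneg w K γ πo β πΩ hT0 k x y) (Finset.mem_univ z)

theorem aux_resolvent (w : P → ℝ) (K : P → S → A → S → ℝ) (γ : ℝ)
    (hγ0 : 0 ≤ γ) (hγ1 : γ < 1)
    (πo : O → S → A → ℝ) (β : O → S → ℝ) (πΩ : S → O → ℝ)
    (hT0 : ∀ x y, 0 ≤ Pgam w K γ πo β πΩ x y)
    (hT1 : ∀ x, ∑ y, Pgam w K γ πo β πΩ x y = γ)
    (D g : S × O → ℝ)
    (hD : ∀ x, D x = g x + ∑ y, Pgam w K γ πo β πΩ x y * D y) (x : S × O) :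
    D x = ∑ z, (∑' k, PgamIter w K γ πo β πΩ k x z) * g z := by
  have hs := aux_iter_summable w K γ hγ0 hγ1 πo β πΩ hT0 hT1 x
  have l1 : Filter.Tendsto (fun n => ∑ z, (∑ k ∈ Finset.range n, PgamIter w K γ πo β πΩ k x z) * g z
      + ∑ z, PgamIter w K γ πo β πΩ n x z * D z) Filter.atTop
      (nhds (∑ z, (∑' k, PgamIter w K γ πo β πΩ k x z) * g z + ∑ z, 0 * D z)) := by
    refine Filter.Tendsto.add ?_ ?_
    · exact tendsto_finsetSum _ fun z _ => ((hs z).hasSum.tendsto_sum_nat).mul_const _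
    · exact tendsto_finsetSum _ fun z _ => ((hs z).tendsto_atTop_zero).mul_const _
  have l2 : (fun n => ∑ z, (∑ k ∈ Finset.range n, PgamIter w K γ πo β πΩ k x z) * g z
      + ∑ z, PgamIter w K γ πo β πΩ n x z * D z) = fun _ => D x :=
    funext fun n => (aux_iter_unroll w K γ πo β πΩ D g hD n x).symm
  rw [l2] at l1
  have := tendsto_nhds_unique tendsto_const_nhds l1
  simpa using this

/-- Termination function gradient theorem for the soft robust loss (Theorem 3). -/
theorem termination_gradient_soft_robust
    [Nonempty S] [Nonempty O] [Nonempty A] [Nonempty P]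
    (γ : ℝ) (hγ0 : 0 ≤ γ) (hγ1 : γ < 1)
    (c : S → A → ℝ)
    (K : P → S → A → S → ℝ)
    (hK0 : ∀ p s a s', 0 ≤ K p s a s') (hK1 : ∀ p s a, ∑ s', K p s a s' = 1)
    (w : P → ℝ) (hw0 : ∀ p, 0 ≤ w p) (hw1 : ∑ p, w p = 1)
    (πΩ : S → O → ℝ)
    (hπΩ0 : ∀ s ω, 0 ≤ πΩ s ω) (hπΩ1 : ∀ s, ∑ ω, πΩ s ω = 1)
    (πo : O → S → A → ℝ)
    (hπo0 : ∀ ω s a, 0 ≤ πo ω s a) (hπo1 : ∀ ω s, ∑ a, πo ω s a = 1)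
    (β : ℝ → O → S → ℝ) (hβ0 : ∀ θ ω s, 0 ≤ β θ ω s) (hβ1 : ∀ θ ω s, β θ ω s ≤ 1)
    (QΩ : ℝ → S → O → P → ℝ) (Qo : ℝ → S → O → A → P → ℝ)
    (Qβ : ℝ → S → O → P → ℝ) (VΩ : ℝ → S → P → ℝ)
    (hQΩ : ∀ θ s ω p, QΩ θ s ω p = ∑ a, πo ω s a * Qo θ s ω a p)
    (hQo : ∀ θ s ω a p,
      Qo θ s ω a p = c s a + γ * ∑ s', K p s a s' * (∑ p', w p' * Qβ θ s' ω p'))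
    (hQβ : ∀ θ s ω p, Qβ θ s ω p = (1 - β θ ω s) * QΩ θ s ω p + β θ ω s * VΩ θ s p)
    (hVΩ : ∀ θ s p, VΩ θ s p = ∑ ω, πΩ s ω * QΩ θ s ω p)
    (θ₀ : ℝ)
    (hdβ : ∀ ω s, DifferentiableAt ℝ (fun θ => β θ ω s) θ₀)
    (hdQ : ∀ s ω p, DifferentiableAt ℝ (fun θ => QΩ θ s ω p) θ₀)
    (s₀ : S) (ω₀ : O) :
    ∑ p, w p * deriv (fun θ => QΩ θ s₀ ω₀ p) θ₀ =
      ∑ q : S × O,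
        (∑' k : ℕ, ∑ s', PgamIter w K γ πo (β θ₀) πΩ k (s₀, ω₀) (s', q.2) *
            ∑ a, πo q.2 s' a * γ * Kbar w K s' a q.1) *
          (deriv (fun θ => β θ q.2 q.1) θ₀) *
          ((∑ p, w p * VΩ θ₀ q.1 p) - (∑ p, w p * QΩ θ₀ q.1 q.2 p)) := by
  have hKb0 : ∀ s a s', 0 ≤ Kbar w K s a s' := fun s a s' =>
    Finset.sum_nonneg fun p _ => mul_nonneg (hw0 p) (hK0 p s a s')
  have hKb1 : ∀ s a, ∑ s', Kbar w K s a s' = 1 := by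
    intro s a
    simp only [Kbar]
    rw [Finset.sum_comm]
    simp only [← Finset.mul_sum, hK1, mul_one, hw1]
  have hT0 : ∀ x y, 0 ≤ Pgam w K γ πo (β θ₀) πΩ x y := by
    intro x y
    refine Finset.sum_nonneg fun a _ => mul_nonneg
      (mul_nonneg (mul_nonneg (hπo0 _ _ _) hγ0) (hKb0 _ _ _)) (add_nonneg (mul_nonneg ?_ ?_) ?_)
    · linarith [hβ1 θ₀ x.2 y.1]
    · split_ifs <;> norm_num
    · exact mul_nonneg (hβ0 _ _ _) (hπΩ0 _ _)
  -- action of the one-step kernel on a function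
  have hTact : ∀ (f : S × O → ℝ) (x : S × O), ∑ y, Pgam w K γ πo (β θ₀) πΩ x y * f y =
      ∑ s', (∑ a, πo x.2 x.1 a * γ * Kbar w K x.1 a s') *
        ((1 - β θ₀ x.2 s') * f (s', x.2) + β θ₀ x.2 s' * ∑ ω, πΩ s' ω * f (s', ω)) := by
    intro f x
    rw [Fintype.sum_prod_type]
    refine Finset.sum_congr rfl fun s' _ => ?_
    simp only [Pgam, ← Finset.sum_mul]
    generalize (∑ a, πo x.2 x.1 a * γ * Kbar w K x.1 a s') = M
    simp only [mul_assoc, ← Finset.mul_sum]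
    congr 1
    simp [add_mul, Finset.sum_add_distrib, Finset.mul_sum, mul_assoc]
  have hT1 : ∀ x, ∑ y, Pgam w K γ πo (β θ₀) πΩ x y = γ := by
    intro x
    have h := hTact (fun _ => 1) x
    simp only [mul_one, hπΩ1, sub_add_cancel] at h
    rw [h, Finset.sum_comm]
    simp only [← Finset.mul_sum, hKb1, mul_one]
    rw [← Finset.sum_mul, hπo1, one_mul]
  -- averaged Bellman equation
  have hBell : ∀ θ s ω, ∑ p, w p * QΩ θ s ω p = ∑ a, πo ω s a * c s a +
      ∑ s', (∑ a, πo ω s a * γ * Kbar w K s a s') *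
        ((1 - β θ ω s') * (∑ p, w p * QΩ θ s' ω p) +
          β θ ω s' * ∑ ω', πΩ s' ω' * ∑ p, w p * QΩ θ s' ω' p) := by
    intro θ s ω
    have e1 : ∀ s', ∑ p', w p' * Qβ θ s' ω p' = (1 - β θ ω s') * (∑ p, w p * QΩ θ s' ω p) +
          β θ ω s' * ∑ ω', πΩ s' ω' * ∑ p, w p * QΩ θ s' ω' p := by
      intro s'
      simp only [hQβ, hVΩ, mul_add, Finset.sum_add_distrib, Finset.mul_sum]
      congr 1
      · exact Finset.sum_congr rfl fun p _ => by ring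
      · rw [Finset.sum_comm]
        exact Finset.sum_congr rfl fun p _ => Finset.sum_congr rfl fun q _ => by ring
    simp only [← e1]
    generalize (fun s' => ∑ p', w p' * Qβ θ s' ω p') = F at *
    have e2 : ∀ p, QΩ θ s ω p = ∑ a, πo ω s a * c s a +
        ∑ s', (∑ a, πo ω s a * γ * K p s a s') * (∑ p', w p' * Qβ θ s' ω p') := by
      intro p
      rw [hQΩ]
      simp only [hQo, mul_add, Finset.sum_add_distrib]
      congr 1
      simp only [Finset.mul_sum Finset.univ (fun s' => _ * _) γ]
      simp only [Finset.sum_mul]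
      rw [Finset.sum_comm]
      refine Finset.sum_congr rfl fun a _ => ?_
      rw [Finset.mul_sum]
      exact Finset.sum_congr rfl fun q _ => by ring
    simp only [e2, mul_add, Finset.sum_add_distrib]
    rw [← Finset.sum_mul, hw1, one_mul]
    congr 1
    simp only [Finset.mul_sum Finset.univ (fun s' => _ * _) (w _)]
    rw [Finset.sum_comm]
    refine Finset.sum_congr rfl fun s' _ => ?_
    simp only [← mul_assoc]
    rw [← Finset.sum_mul]
    congr 1
    simp only [Kbar, Finset.mul_sum]
    rw [Finset.sum_comm]
    exact Finset.sum_congr rfl fun a _ => Finset.sum_congr rfl fun p _ => by ring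
  set D : S × O → ℝ := fun x => ∑ p, w p * deriv (fun θ => QΩ θ x.1 x.2 p) θ₀ with hDdef
  have hDer : ∀ s ω, HasDerivAt (fun θ => ∑ p, w p * QΩ θ s ω p) (D (s, ω)) θ₀ := by
    intro s ω
    exact HasDerivAt.fun_sum fun p _ => (hdQ s ω p).hasDerivAt.const_mul (w p)
  have hVbar : ∀ s, ∑ p, w p * VΩ θ₀ s p = ∑ ω', πΩ s ω' * ∑ p, w p * QΩ θ₀ s ω' p := by
    intro s
    simp only [hVΩ, Finset.mul_sum]
    rw [Finset.sum_comm]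
    exact Finset.sum_congr rfl fun p _ => Finset.sum_congr rfl fun q _ => by ring
  set b : S → O → ℝ := fun s ω => deriv (fun θ => β θ ω s) θ₀ *
    ((∑ p, w p * VΩ θ₀ s p) - (∑ p, w p * QΩ θ₀ s ω p)) with hb
  have hD : ∀ x, D x = (∑ s', (∑ a, πo x.2 x.1 a * γ * Kbar w K x.1 a s') * b s' x.2)
      + ∑ y, Pgam w K γ πo (β θ₀) πΩ x y * D y := by
    rintro ⟨s, ω⟩
    have h1 := hDer s ω
    have h2 : HasDerivAt (fun θ => ∑ p, w p * QΩ θ s ω p)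
        (∑ s', (∑ a, πo ω s a * γ * Kbar w K s a s') *
          ((-deriv (fun θ => β θ ω s') θ₀ * (∑ p, w p * QΩ θ₀ s' ω p)
            + (1 - β θ₀ ω s') * D (s', ω)) +
          (deriv (fun θ => β θ ω s') θ₀ * (∑ ω', πΩ s' ω' * ∑ p, w p * QΩ θ₀ s' ω' p) +
            β θ₀ ω s' * ∑ ω', πΩ s' ω' * D (s', ω')))) θ₀ := by
      rw [funext fun θ => hBell θ s ω]
      refine HasDerivAt.const_add _ (HasDerivAt.fun_sum fun s' _ => HasDerivAt.const_mul _ ?_)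
      have hβd := (hdβ ω s').hasDerivAt
      refine HasDerivAt.fun_add ((hβd.const_sub 1).fun_mul (hDer s' ω)) (hβd.fun_mul ?_)
      exact HasDerivAt.fun_sum fun ω' _ => (hDer s' ω').const_mul _
    rw [h1.unique h2, hTact, ← Finset.sum_add_distrib]
    refine Finset.sum_congr rfl fun s' _ => ?_
    simp only [hb, hVbar]
    ring
  have hmain := aux_resolvent w K γ hγ0 hγ1 πo (β θ₀) πΩ hT0 hT1 D _ hD (s₀, ω₀)
  have hsm := aux_iter_summable w K γ hγ0 hγ1 πo (β θ₀) πΩ hT0 hT1 (s₀, ω₀)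
  change D (s₀, ω₀) = _
  rw [hmain]
  have hts : ∀ q : S × O, (∑' k : ℕ, ∑ s', PgamIter w K γ πo (β θ₀) πΩ k (s₀, ω₀) (s', q.2) *
            ∑ a, πo q.2 s' a * γ * Kbar w K s' a q.1) =
      ∑ s', (∑' k : ℕ, PgamIter w K γ πo (β θ₀) πΩ k (s₀, ω₀) (s', q.2)) *
            ∑ a, πo q.2 s' a * γ * Kbar w K s' a q.1 := by
    intro q
    rw [Summable.tsum_finsetSum fun s' _ => (hsm (s', q.2)).mul_right _]
    exact Finset.sum_congr rfl fun s' _ => tsum_mul_right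
  simp only [hts]
  generalize (fun z => ∑' k : ℕ, PgamIter w K γ πo (β θ₀) πΩ k (s₀, ω₀) z) = F
  rw [Fintype.sum_prod_type_right, Fintype.sum_prod_type_right]
  refine Finset.sum_congr rfl fun ω _ => ?_
  simp only [mul_assoc _ (deriv _ _) _]
  simp only [Finset.mul_sum Finset.univ (fun s' => _ * b _ _)]
  rw [Finset.sum_comm]
  refine Finset.sum_congr rfl fun s _ => ?_
  rw [Finset.sum_mul]
  refine Finset.sum_congr rfl fun s' _ => ?_
  simp only [hb, mul_assoc]
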